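/- arXiv:2109.03839 — 3 statements merged into one kernel-verified Lean document; each statement's English description precedes it below -/
import Mathlib

section
/- (Bound on evolved deviation, Lemma 4) Let f : ℝ^d → ℝ be twice continuously differentiable with m·I ≼ ∇²f(x) ≼ L·I for all x (0 < m ≤ L), κ = L/m. Let (x_t) and (y_t) be two solutions of the overdamped Langevin dynamics driven by the SAME standard d-dimensional Brownian motion, with square-integrable initial values x and y. Define z = (x_h − y_h) − (x − y). Then for every h with 0 < h ≤ 1/(4κL): E‖z‖² ≤ (m/4) · E‖x − y‖² · h. -/
open MeasureTheory ProbabilityTheory Real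
open scoped ENNReal NNReal

noncomputable section

/-- `ℝ^d` with the Euclidean structure. -/
abbrev Euc (d : ℕ) := EuclideanSpace ℝ (Fin d)

/-- The standard Gaussian measure `N(0, I_d)` on `ℝ^d`. -/
noncomputable def stdGaussian (d : ℕ) : Measure (Euc d) :=
  (Measure.pi fun _ : Fin d => gaussianReal 0 1).map (EuclideanSpace.equiv (Fin d) ℝ).symm

/-- The centered Gaussian measure on `ℝ^d` with covariance `σ2 • I_d`. -/
noncomputable def isoGaussian (d : ℕ) (σ2 : ℝ) : Measure (Euc d) :=
  (stdGaussian d).map fun x => Real.sqrt σ2 • x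

/-- `B` is a standard `d`-dimensional Brownian motion with respect to the filtration `ℱ`
under the probability measure `P`. -/
structure IsStdBrownian {d : ℕ} {Ω : Type*} {mΩ : MeasurableSpace Ω} (P : Measure Ω)
    (ℱ : Filtration ℝ mΩ) (B : ℝ → Ω → Euc d) : Prop where
  init : ∀ ω, B 0 ω = 0
  cont : ∀ ω, Continuous fun t => B t ω
  adapted : StronglyAdapted ℱ B
  incr_law : ∀ s t : ℝ, 0 ≤ s → s ≤ t →
    P.map (fun ω => B t ω - B s ω) = isoGaussian d (t - s)
  incr_indep : ∀ s t : ℝ, 0 ≤ s → s ≤ t →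
    Indep (MeasurableSpace.comap (fun ω => B t ω - B s ω) inferInstance) (ℱ s) P

/-- `X` is a (pathwise) solution of the overdamped Langevin dynamics
`dX_t = -∇f(X_t) dt + √2 dB_t`: a continuous adapted process satisfying the integral
equation `X_t = X_0 - ∫₀ᵗ ∇f(X_s) ds + √2 B_t` for all `t ≥ 0`. -/
structure IsLangevinSolution {d : ℕ} {Ω : Type*} {mΩ : MeasurableSpace Ω}
    (ℱ : Filtration ℝ mΩ) (f : Euc d → ℝ) (B : ℝ → Ω → Euc d) (X : ℝ → Ω → Euc d) : Prop where
  cont : ∀ ω, Continuous fun t => X t ω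
  adapted : StronglyAdapted ℱ X
  eqn : ∀ ω, ∀ t : ℝ, 0 ≤ t →
    X t ω = X 0 ω - (∫ s in (0:ℝ)..t, gradient f (X s ω)) + Real.sqrt 2 • B t ω

/-- The Hessian bounds `m • I ≼ ∇²f(x) ≼ L • I` for all `x`, expressed through the second
iterated Fréchet derivative: `m ‖v‖² ≤ ⟨v, ∇²f(x) v⟩ ≤ L ‖v‖²`. -/
def HessianBounds {d : ℕ} (m L : ℝ) (f : Euc d → ℝ) : Prop :=
  ∀ x v : Euc d, m * ‖v‖ ^ 2 ≤ iteratedFDeriv ℝ 2 f x ![v, v] ∧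
    iteratedFDeriv ℝ 2 f x ![v, v] ≤ L * ‖v‖ ^ 2

end

/-!
The noise cancels in the difference of two solutions, so `D t = X t - Y t` is differentiable with
`D' = -(∇f(X) - ∇f(Y))`. Monotonicity of `∇f` makes `‖D‖` nonincreasing, and then the Lipschitz
bound gives `‖D'‖ ≤ L ‖D 0‖`, whence `‖D h - D 0‖ ≤ L h ‖D 0‖` along every path. The step size
condition says precisely that `(L h)² ≤ (m / 4) h`.
-/

section Gradient

open scoped InnerProductSpace

variable {E : Type*} [NormedAddCommGroup E] [InnerProductSpace ℝ E]

lemma opNorm_le_of_isSymmetric_of_abs_inner_le {T : E →L[ℝ] E} (hT : T.IsSymmetric) {C : ℝ}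
    (hC : 0 ≤ C) (h : ∀ v, |⟪T v, v⟫_ℝ| ≤ C * ‖v‖ ^ 2) : ‖T‖ ≤ C := by
  rw [T.norm_eq_iSup_rayleighQuotient hT]
  refine ciSup_le fun v => ?_
  rw [abs_div, abs_sq]
  exact div_le_of_le_mul₀ (sq_nonneg _) hC (h v)

lemma mul_norm_sq_le_inner_sub_of_le_inner_fderiv {b : E → E} (hb : Differentiable ℝ b) {m : ℝ}
    (h : ∀ x v, m * ‖v‖ ^ 2 ≤ ⟪fderiv ℝ b x v, v⟫_ℝ) (x y : E) :
    m * ‖x - y‖ ^ 2 ≤ ⟪b x - b y, x - y⟫_ℝ := by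
  have hderiv (t : ℝ) : HasDerivAt (fun t : ℝ => ⟪b (AffineMap.lineMap y x t), x - y⟫_ℝ)
      ⟪fderiv ℝ b (AffineMap.lineMap y x t) (x - y), x - y⟫_ℝ t := by
    simpa using ((hb _).hasFDerivAt.comp_hasDerivAt t AffineMap.hasDerivAt_lineMap).inner ℝ
      (hasDerivAt_const t (x - y))
  have := mul_sub_le_image_sub_of_le_deriv (fun t => (hderiv t).differentiableAt)
    (fun t => (h _ _).trans_eq (hderiv t).deriv.symm) (zero_le_one' ℝ)
  simpa [inner_sub_left] using this

variable [CompleteSpace E] {f : E → ℝ}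

lemma inner_fderiv_gradient (f : E → ℝ) (x v w : E) :
    ⟪fderiv ℝ (gradient f) x v, w⟫_ℝ = iteratedFDeriv ℝ 2 f x ![v, w] := by
  have : fderiv ℝ (gradient f) x = _ :=
    (InnerProductSpace.toDual ℝ E).symm.toContinuousLinearEquiv.comp_fderiv
  simp [this, iteratedFDeriv_two_apply]

lemma differentiable_gradient (hf : ContDiff ℝ 2 f) : Differentiable ℝ (gradient f) :=
  (InnerProductSpace.toDual ℝ E).symm.differentiable.comp
    ((hf.fderiv_right (m := 1) (by norm_num)).differentiable one_ne_zero)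

lemma isSymmetric_fderiv_gradient (hf : ContDiff ℝ 2 f) (x : E) :
    (fderiv ℝ (gradient f) x).IsSymmetric := by
  intro v w
  have hsymm : IsSymmSndFDerivAt ℝ f x := hf.contDiffAt.isSymmSndFDerivAt (by simp)
  simpa [real_inner_comm _ v, inner_fderiv_gradient, iteratedFDeriv_two_apply] using hsymm v w

end Gradient

namespace HessianBounds

open scoped InnerProductSpace

variable {d : ℕ} {m : ℝ} {f : Euc d → ℝ}

lemma mul_norm_sq_le_inner_gradient_sub {L : ℝ} (hHess : HessianBounds m L f)
    (hf : ContDiff ℝ 2 f) (x y : Euc d) :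
    m * ‖x - y‖ ^ 2 ≤ ⟪gradient f x - gradient f y, x - y⟫_ℝ :=
  mul_norm_sq_le_inner_sub_of_le_inner_fderiv (differentiable_gradient hf)
    (fun z v => (hHess z v).1.trans_eq (inner_fderiv_gradient f z v v).symm) x y

lemma lipschitzWith_gradient {L : ℝ≥0} (hHess : HessianBounds m L f) (hf : ContDiff ℝ 2 f)
    (hmL : -L ≤ m) : LipschitzWith L (gradient f) := by
  refine lipschitzWith_of_nnnorm_fderiv_le (𝕜 := ℝ) (differentiable_gradient hf) fun x => ?_
  refine opNorm_le_of_isSymmetric_of_abs_inner_le (isSymmetric_fderiv_gradient hf x) L.2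
    fun v => ?_
  obtain ⟨hlower, hupper⟩ := hHess x v
  rw [inner_fderiv_gradient, abs_le, ← neg_mul]
  exact ⟨(mul_le_mul_of_nonneg_right hmL (sq_nonneg _)).trans hlower, hupper⟩

end HessianBounds

/-- The path `x` solves the integral equation `x t = x 0 - ∫₀ᵗ b(x s) ds + N t` for `t ≥ 0`, that
is, `dx = -b(x) dt + dN` with an arbitrary driving path `N`; the drift is `-b`, so that `b = ∇f`
is the Langevin case. -/
structure IsDriftSolution {E : Type*} [NormedAddCommGroup E] [NormedSpace ℝ E] (b : E → E)
    (N x : ℝ → E) : Prop where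
  cont : Continuous x
  eqn : ∀ t, 0 ≤ t → x t = x 0 - (∫ s in (0 : ℝ)..t, b (x s)) + N t

namespace IsDriftSolution

open scoped InnerProductSpace

section Banach

variable {E : Type*} [NormedAddCommGroup E] [NormedSpace ℝ E] {b : E → E} {N x y : ℝ → E} {t : ℝ}

lemma sub_eq_sub_integral (hb : Continuous b) (hx : IsDriftSolution b N x)
    (hy : IsDriftSolution b N y) (ht : 0 ≤ t) :
    x t - y t = (x 0 - y 0) - ∫ s in (0 : ℝ)..t, (b (x s) - b (y s)) := by
  have hint {z : ℝ → E} (hz : IsDriftSolution b N z) :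
      IntervalIntegrable (fun s => b (z s)) volume 0 t :=
    (hb.comp hz.cont).intervalIntegrable _ _
  rw [intervalIntegral.integral_sub (hint hx) (hint hy), hx.eqn t ht, hy.eqn t ht]
  abel

lemma hasDerivAt_sub [CompleteSpace E] (hb : Continuous b) (hx : IsDriftSolution b N x)
    (hy : IsDriftSolution b N y) (ht : 0 < t) :
    HasDerivAt (fun s => x s - y s) (-(b (x t) - b (y t))) t := by
  have hcont : Continuous fun s => b (x s) - b (y s) := (hb.comp hx.cont).sub (hb.comp hy.cont)
  refine ((hcont.integral_hasStrictDerivAt 0 t).hasDerivAt.const_sub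
    (x 0 - y 0)).congr_of_eventuallyEq ?_
  filter_upwards [lt_mem_nhds ht] with s hs using sub_eq_sub_integral hb hx hy hs.le

end Banach

variable {E : Type*} [NormedAddCommGroup E] [InnerProductSpace ℝ E] [CompleteSpace E]
  {b : E → E} {N x y : ℝ → E}

lemma antitoneOn_norm_sub (hb : Continuous b) (hmono : ∀ u v, 0 ≤ ⟪b u - b v, u - v⟫_ℝ)
    (hx : IsDriftSolution b N x) (hy : IsDriftSolution b N y) :
    AntitoneOn (fun t => ‖x t - y t‖) (Set.Ici 0) := by
  suffices hsq : AntitoneOn (fun t => ‖x t - y t‖ ^ 2) (Set.Ici 0) from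
    fun s hs t ht hst => le_of_sq_le_sq (hsq hs ht hst) (norm_nonneg _)
  have hderiv : ∀ t ∈ interior (Set.Ici (0 : ℝ)), HasDerivAt (fun t => ‖x t - y t‖ ^ 2)
      (2 * ⟪x t - y t, -(b (x t) - b (y t))⟫_ℝ) t := fun t ht =>
    (hasDerivAt_sub hb hx hy (interior_Ici.subset ht)).norm_sq
  refine antitoneOn_of_deriv_nonpos (convex_Ici 0)
    ((hx.cont.sub hy.cont).norm.pow 2).continuousOn
    (fun t ht => (hderiv t ht).differentiableAt.differentiableWithinAt) fun t ht => ?_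
  rw [(hderiv t ht).deriv, inner_neg_right, real_inner_comm]
  linarith [hmono (x t) (y t)]

lemma norm_deviation_le {K : ℝ≥0} (hlip : LipschitzWith K b)
    (hmono : ∀ u v, 0 ≤ ⟪b u - b v, u - v⟫_ℝ) (hx : IsDriftSolution b N x)
    (hy : IsDriftSolution b N y) {t : ℝ} (ht : 0 ≤ t) :
    ‖(x t - y t) - (x 0 - y 0)‖ ≤ K * t * ‖x 0 - y 0‖ := by
  have hdrift : ∀ s ∈ Set.uIoc 0 t, ‖b (x s) - b (y s)‖ ≤ K * ‖x 0 - y 0‖ := by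
    intro s hs
    have hs0 : 0 ≤ s := (Set.uIoc_of_le ht ▸ hs).1.le
    calc ‖b (x s) - b (y s)‖ ≤ K * ‖x s - y s‖ := hlip.norm_sub_le _ _
      _ ≤ K * ‖x 0 - y 0‖ := by
        gcongr
        exact antitoneOn_norm_sub hlip.continuous hmono hx hy Set.self_mem_Ici hs0 hs0
  calc ‖(x t - y t) - (x 0 - y 0)‖ = ‖∫ s in (0 : ℝ)..t, (b (x s) - b (y s))‖ := by
        rw [sub_eq_sub_integral hlip.continuous hx hy ht, sub_sub_cancel_left, norm_neg]
    _ ≤ K * ‖x 0 - y 0‖ * |t - 0| := intervalIntegral.norm_integral_le_of_norm_le_const hdrift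
    _ = K * t * ‖x 0 - y 0‖ := by rw [sub_zero, abs_of_nonneg ht]; ring

lemma eLpNorm_deviation_le {Ω : Type*} {mΩ : MeasurableSpace Ω} {P : Measure Ω}
    {K : ℝ≥0} (hlip : LipschitzWith K b) (hmono : ∀ u v, 0 ≤ ⟪b u - b v, u - v⟫_ℝ)
    {N X Y : ℝ → Ω → E} (hX : ∀ᵐ ω ∂P, IsDriftSolution b (N · ω) (X · ω))
    (hY : ∀ᵐ ω ∂P, IsDriftSolution b (N · ω) (Y · ω)) {t : ℝ} (ht : 0 ≤ t) (p : ℝ≥0∞) :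
    eLpNorm (fun ω => (X t ω - Y t ω) - (X 0 ω - Y 0 ω)) p P ≤
      ENNReal.ofReal (K * t) * eLpNorm (X 0 - Y 0) p P := by
  refine eLpNorm_le_mul_eLpNorm_of_ae_le_mul ?_ p
  filter_upwards [hX, hY] with ω hXω hYω using norm_deviation_le hlip hmono hXω hYω ht

end IsDriftSolution

lemma IsLangevinSolution.isDriftSolution {d : ℕ} {Ω : Type*} {mΩ : MeasurableSpace Ω}
    {ℱ : Filtration ℝ mΩ} {f : Euc d → ℝ} {B X : ℝ → Ω → Euc d}
    (hX : IsLangevinSolution ℱ f B X) (ω : Ω) :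
    IsDriftSolution (gradient f) (fun t => √2 • B t ω) (X · ω) :=
  ⟨hX.cont ω, hX.eqn ω⟩

section SecondMoment

variable {E Ω : Type*} [NormedAddCommGroup E] {mΩ : MeasurableSpace Ω} {P : Measure Ω}

lemma lintegral_enorm_sq_eq_eLpNorm_sq (g : Ω → E) :
    ∫⁻ ω, ‖g ω‖ₑ ^ 2 ∂P = eLpNorm g 2 P ^ 2 := by
  simpa using (eLpNorm_nnreal_pow_eq_lintegral (f := g) (μ := P) (p := 2) two_ne_zero).symm

lemma eLpNorm_sq_eq_ofReal_integral {g : Ω → E} (hg : MemLp g 2 P) :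
    eLpNorm g 2 P ^ 2 = ENNReal.ofReal (∫ ω, ‖g ω‖ ^ 2 ∂P) := by
  rw [ofReal_integral_eq_lintegral_ofReal (hg.integrable_norm_pow two_ne_zero)
    (ae_of_all _ fun ω => sq_nonneg ‖g ω‖), ← lintegral_enorm_sq_eq_eLpNorm_sq]
  simp only [ENNReal.ofReal_pow (norm_nonneg _), ofReal_norm]

end SecondMoment

lemma sq_mul_le_of_le_one_div {m L h a : ℝ} (hm : 0 < m) (hL : 0 < L) (hh : 0 ≤ h) (ha : 0 ≤ a)
    (hstep : h ≤ 1 / (4 * (L / m) * L)) : (L * h) ^ 2 * a ≤ m / 4 * a * h := by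
  have hLh : L ^ 2 * h ≤ m / 4 := by
    rw [show 1 / (4 * (L / m) * L) = m / 4 / L ^ 2 by field_simp, le_div_iff₀' (by positivity)]
      at hstep
    exact hstep
  calc (L * h) ^ 2 * a = L ^ 2 * h * (a * h) := by ring
    _ ≤ m / 4 * (a * h) := by gcongr
    _ = m / 4 * a * h := by ring

open scoped InnerProductSpace in
theorem langevin_evolved_deviation_bound_general {E Ω : Type*} [NormedAddCommGroup E]
    [InnerProductSpace ℝ E] [CompleteSpace E] {mΩ : MeasurableSpace Ω} {P : Measure Ω}
    {b : E → E} {K : ℝ≥0} (hlip : LipschitzWith K b) (hmono : ∀ u v, 0 ≤ ⟪b u - b v, u - v⟫_ℝ)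
    {N X Y : ℝ → Ω → E} (hX : ∀ᵐ ω ∂P, IsDriftSolution b (N · ω) (X · ω))
    (hY : ∀ᵐ ω ∂P, IsDriftSolution b (N · ω) (Y · ω)) (hXY : MemLp (X 0 - Y 0) 2 P)
    {h : ℝ} (hh : 0 ≤ h) :
    ∫⁻ ω, ‖(X h ω - Y h ω) - (X 0 ω - Y 0 ω)‖ₑ ^ 2 ∂P ≤
      ENNReal.ofReal ((K * h) ^ 2 * ∫ ω, ‖X 0 ω - Y 0 ω‖ ^ 2 ∂P) := by
  calc ∫⁻ ω, ‖(X h ω - Y h ω) - (X 0 ω - Y 0 ω)‖ₑ ^ 2 ∂P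
      = eLpNorm (fun ω => (X h ω - Y h ω) - (X 0 ω - Y 0 ω)) 2 P ^ 2 :=
        lintegral_enorm_sq_eq_eLpNorm_sq _
    _ ≤ (ENNReal.ofReal (K * h) * eLpNorm (X 0 - Y 0) 2 P) ^ 2 := by
        gcongr
        exact IsDriftSolution.eLpNorm_deviation_le hlip hmono hX hY hh 2
    _ = ENNReal.ofReal ((K * h) ^ 2 * ∫ ω, ‖X 0 ω - Y 0 ω‖ ^ 2 ∂P) := by
        rw [mul_pow, eLpNorm_sq_eq_ofReal_integral hXY, ENNReal.ofReal_mul (sq_nonneg _),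
          ENNReal.ofReal_pow (by positivity)]
        simp only [Pi.sub_apply]

/-- **Bound on evolved deviation** (Lemma 4).
If `f` is `m`-strongly convex and `L`-smooth (`0 < m ≤ L`) and `X`, `Y` are two solutions of
the overdamped Langevin dynamics driven by the same Brownian motion with square-integrable
initial values, then for every `0 < h ≤ 1/(4κL)` (where `κ = L/m`), the deviation
`z = (X_h - Y_h) - (X_0 - Y_0)` satisfies `E‖z‖² ≤ (m/4) E‖X_0 - Y_0‖² h`. -/
theorem langevin_evolved_deviation_bound
    {d : ℕ} {Ω : Type*} {mΩ : MeasurableSpace Ω} {P : Measure Ω} [IsProbabilityMeasure P]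
    {ℱ : Filtration ℝ mΩ} {f : Euc d → ℝ} {m L : ℝ}
    (hm : 0 < m) (hmL : m ≤ L) (hf : ContDiff ℝ 2 f) (hHess : HessianBounds m L f)
    {B X Y : ℝ → Ω → Euc d} (hB : IsStdBrownian P ℱ B)
    (hX : IsLangevinSolution ℱ f B X) (hY : IsLangevinSolution ℱ f B Y)
    (hX0 : MemLp (X 0) 2 P) (hY0 : MemLp (Y 0) 2 P)
    {h : ℝ} (hh0 : 0 < h) (hh1 : h ≤ 1 / (4 * (L / m) * L)) :
    (∫⁻ ω, (‖(X h ω - Y h ω) - (X 0 ω - Y 0 ω)‖₊ : ℝ≥0∞) ^ 2 ∂P) ≤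
      ENNReal.ofReal (m / 4 * (∫ ω, ‖X 0 ω - Y 0 ω‖ ^ 2 ∂P) * h) := by
  lift L to ℝ≥0 using (hm.trans_le hmL).le
  have hlip : LipschitzWith L (gradient f) :=
    hHess.lipschitzWith_gradient hf ((neg_nonpos.2 L.2).trans hm.le)
  have hmono u v : 0 ≤ inner ℝ (gradient f u - gradient f v) (u - v) :=
    (by positivity : 0 ≤ m * ‖u - v‖ ^ 2).trans (hHess.mul_norm_sq_le_inner_gradient_sub hf u v)
  exact (langevin_evolved_deviation_bound_general hlip hmono (ae_of_all _ hX.isDriftSolution)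
    (ae_of_all _ hY.isDriftSolution) (hX0.sub hY0) hh0.le).trans <| ENNReal.ofReal_le_ofReal <|
      sq_mul_le_of_le_one_div hm (hm.trans_le hmL) hh0.le (by positivity) hh1
end

section
/- (Local strong error of LMC, Lemma 5) Let f : ℝ^d → ℝ be twice continuously differentiable with m·I ≼ ∇²f(x) ≼ L·I for all x (0 < m ≤ L), κ = L/m, and ∇f(0) = 0. Let (x_t) be a solution of the overdamped Langevin dynamics driven by a standard d-dimensional Brownian motion (B_t), with square-integrable initial value x, and let x̄₁ = x − h∇f(x) + √2·B_h be the one-step LMC update driven by the same Brownian increment. Then for every h with 0 ≤ h ≤ 1/(4κL): (E‖x̄₁ − x_h‖²)^{1/2} ≤ 2L (d + (m/2) E‖x‖²)^{1/2} · h^{3/2}. -/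
open MeasureTheory ProbabilityTheory Real
open scoped ENNReal NNReal

/-!
By the integral equation, the error of one Euler step is the increment of the drift accumulated over
the step, `∫₀ʰ (∇f(X_s) - ∇f(X_0)) ds`, so it is controlled pathwise by
`J = ∫₀ʰ ‖X_s - X_0‖² ds` through Cauchy–Schwarz and the Lipschitz bound. Inserting the same bound
into the equation for `X_t - X_0` and integrating over `t ∈ [0, h]` bounds `J` by
`(3/2) (L h)² J` plus terms in the initial drift and the noise. Since `L h ≤ 1/4` the first term is
absorbed, so no Grönwall inequality is needed, and it remains to take expectations using
`E ‖B_s‖² = d s`.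
-/

section HessianBounds

lemma opNorm_le_of_abs_apply_self_le {E : Type*} [NormedAddCommGroup E] [InnerProductSpace ℝ E]
    {A : E →L[ℝ] E →L[ℝ] ℝ} (hA : ∀ u v, A u v = A v u) {C : ℝ} (hC : 0 ≤ C)
    (hAC : ∀ v, |A v v| ≤ C * ‖v‖ ^ 2) : ‖A‖ ≤ C := by
  refine ContinuousLinearMap.opNorm_le_of_unit_norm hC fun u hu ↦
    ContinuousLinearMap.opNorm_le_of_unit_norm hC fun v hv ↦ ?_
  have polarization : 4 * A u v = A (u + v) (u + v) - A (u - v) (u - v) := by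
    simp only [map_add, map_sub, add_apply, sub_apply, hA v u]
    ring
  have parallelogram : ‖u + v‖ ^ 2 + ‖u - v‖ ^ 2 = 4 := by
    linear_combination parallelogram_law_with_norm ℝ u v + 2 * (‖u‖ + 1) * hu + 2 * (‖v‖ + 1) * hv
  suffices |4 * A u v| ≤ 4 * C by
    rw [abs_mul, abs_of_pos four_pos] at this
    exact le_of_mul_le_mul_left this four_pos
  calc |4 * A u v| ≤ |A (u + v) (u + v)| + |A (u - v) (u - v)| := polarization ▸ abs_sub _ _
    _ ≤ C * ‖u + v‖ ^ 2 + C * ‖u - v‖ ^ 2 := add_le_add (hAC _) (hAC _)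
    _ = 4 * C := by rw [← mul_add, parallelogram, mul_comm]

lemma HessianBounds.lipschitzWith_gradient_s3 {d : ℕ} {f : Euc d → ℝ} {m : ℝ} {K : ℝ≥0}
    (hHess : HessianBounds m K f) (hf : ContDiff ℝ 2 f) (hmK : -K ≤ m) :
    LipschitzWith K (gradient f) := by
  rw [← (InnerProductSpace.toDual ℝ (Euc d)).isometry.lipschitzWith_iff, toDual_comp_gradient]
  have hdf : ContDiff ℝ 1 (fderiv ℝ f) := hf.fderiv_right (by norm_num)
  refine lipschitzWith_of_nnnorm_fderiv_le (hdf.differentiable one_ne_zero) fun x ↦ ?_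
  refine opNorm_le_of_abs_apply_self_le (hf.contDiffAt.isSymmSndFDerivAt (by simp)) K.2 fun v ↦ ?_
  obtain ⟨lower, upper⟩ := hHess x v
  simp only [iteratedFDeriv_two_apply, Matrix.cons_val_zero, Matrix.cons_val_one] at lower upper
  exact abs_le.2 ⟨(neg_mul (K : ℝ) _).symm.trans_le <|
    (mul_le_mul_of_nonneg_right hmK (sq_nonneg _)).trans lower, upper⟩

end HessianBounds

section IntegralEquation

lemma sq_norm_add₃_le {E : Type*} [SeminormedAddCommGroup E] (a b c : E) :
    ‖a + b + c‖ ^ 2 ≤ 3 * (‖a‖ ^ 2 + ‖b‖ ^ 2 + ‖c‖ ^ 2) := by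
  have := pow_le_pow_left₀ (norm_nonneg _) (norm_add₃_le (a := a) (b := b) (c := c)) 2
  nlinarith [sq_nonneg (‖a‖ - ‖b‖), sq_nonneg (‖b‖ - ‖c‖), sq_nonneg (‖a‖ - ‖c‖)]

variable {E : Type*} [NormedAddCommGroup E] [NormedSpace ℝ E]

lemma sq_norm_intervalIntegral_le {u : ℝ → E} {a b : ℝ} (hab : a ≤ b) (hu : Continuous u) :
    ‖∫ s in a..b, u s‖ ^ 2 ≤ (b - a) * ∫ s in a..b, ‖u s‖ ^ 2 := by
  obtain rfl | hlt := hab.eq_or_lt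
  · simp
  have hba : 0 < b - a := sub_pos.2 hlt
  have jensen : (⨍ s in a..b, ‖u s‖) ^ 2 ≤ ⨍ s in a..b, ‖u s‖ ^ 2 := by
    refine (even_two.convexOn_pow (𝕜 := ℝ)).map_set_average_le (by fun_prop) isClosed_univ
      (by simp [Set.uIoc_of_le hab, hlt]) (by simp [Set.uIoc_of_le hab]) (by simp) ?_ ?_
    · exact (Continuous.intervalIntegrable (by fun_prop) a b).def'
    · exact (Continuous.intervalIntegrable (by fun_prop) a b).def'
  rw [interval_average_eq_div, interval_average_eq_div, div_pow,
    div_le_div_iff₀ (by positivity) hba] at jensen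
  calc ‖∫ s in a..b, u s‖ ^ 2 ≤ (∫ s in a..b, ‖u s‖) ^ 2 := by
        gcongr
        exact intervalIntegral.norm_integral_le_integral_norm hab
    _ ≤ (b - a) * ∫ s in a..b, ‖u s‖ ^ 2 := by
        refine le_of_mul_le_mul_right (jensen.trans_eq ?_) hba
        ring

/-- The path `x` solves `dx_t = -g(x_t) dt + dw_t` on `[0, ∞)`, in integral form, for the drift
`-g` and the forcing path `w`. -/
structure IsIntegralSolution (g : E → E) (w x : ℝ → E) : Prop where
  cont : Continuous x
  eqn : ∀ t, 0 ≤ t → x t = x 0 - (∫ s in (0 : ℝ)..t, g (x s)) + w t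

/-- One explicit Euler step of size `h` from `x` for the drift `-g`, with noise increment `δ`;
for `g = ∇f` and `δ = √2 B_h` this is the LMC update. -/
def eulerStep (g : E → E) (h : ℝ) (x δ : E) : E := x - h • g x + δ

variable {g : E → E} {K : ℝ≥0} {w x : ℝ → E} {h t : ℝ}

lemma sq_norm_integral_sub_le_of_lipschitzWith (hg : LipschitzWith K g) (hx : Continuous x)
    (ht : 0 ≤ t) :
    ‖∫ s in (0 : ℝ)..t, (g (x s) - g (x 0))‖ ^ 2 ≤
      K ^ 2 * t * ∫ s in (0 : ℝ)..t, ‖x s - x 0‖ ^ 2 := by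
  have hgc := hg.continuous
  calc ‖∫ s in (0 : ℝ)..t, (g (x s) - g (x 0))‖ ^ 2
      ≤ t * ∫ s in (0 : ℝ)..t, ‖g (x s) - g (x 0)‖ ^ 2 := by
        simpa only [sub_zero] using
          sq_norm_intervalIntegral_le (u := fun s ↦ g (x s) - g (x 0)) ht (by fun_prop)
    _ ≤ t * ∫ s in (0 : ℝ)..t, K ^ 2 * ‖x s - x 0‖ ^ 2 := by
        gcongr
        refine intervalIntegral.integral_mono_on ht
          (Continuous.intervalIntegrable (by fun_prop) _ _)
          (Continuous.intervalIntegrable (by fun_prop) _ _) fun s _ ↦ ?_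
        rw [← mul_pow]
        gcongr
        exact hg.norm_sub_le _ _
    _ = K ^ 2 * t * ∫ s in (0 : ℝ)..t, ‖x s - x 0‖ ^ 2 := by
        rw [intervalIntegral.integral_const_mul]
        ring

namespace IsIntegralSolution

variable [CompleteSpace E]

lemma eulerStep_sub (hx : IsIntegralSolution g w x) (hg : Continuous g) (hh : 0 ≤ h) :
    eulerStep g h (x 0) (w h) - x h = ∫ s in (0 : ℝ)..h, (g (x s) - g (x 0)) := by
  have hxc := hx.cont
  rw [intervalIntegral.integral_sub (Continuous.intervalIntegrable (by fun_prop) _ _)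
    intervalIntegrable_const, intervalIntegral.integral_const, sub_zero, eulerStep, hx.eqn h hh]
  abel

lemma sq_norm_sub_le (hx : IsIntegralSolution g w x) (hg : LipschitzWith K g) (ht : 0 ≤ t) :
    ‖x t - x 0‖ ^ 2 ≤ 3 * (K ^ 2 * t * (∫ s in (0 : ℝ)..t, ‖x s - x 0‖ ^ 2) +
      t ^ 2 * ‖g (x 0)‖ ^ 2 + ‖w t‖ ^ 2) := by
  have decomposition : x t - x 0 =
      -(∫ s in (0 : ℝ)..t, (g (x s) - g (x 0))) + -(t • g (x 0)) + w t := by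
    rw [← hx.eulerStep_sub hg.continuous ht, eulerStep]
    abel
  have drift := sq_norm_integral_sub_le_of_lipschitzWith hg hx.cont ht
  rw [decomposition]
  refine (sq_norm_add₃_le _ _ _).trans ?_
  rw [norm_neg, norm_neg, norm_smul, mul_pow, Real.norm_eq_abs, sq_abs]
  gcongr

lemma integral_sq_norm_sub_le (hx : IsIntegralSolution g w x) (hg : LipschitzWith K g)
    (hw : Continuous w) (hh : 0 ≤ h) (hKh : K * h ≤ 1 / 4) :
    ∫ t in (0 : ℝ)..h, ‖x t - x 0‖ ^ 2 ≤
      4 / 3 * (h ^ 3 * ‖g (x 0)‖ ^ 2 + 3 * ∫ t in (0 : ℝ)..h, ‖w t‖ ^ 2) := by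
  have hxc := hx.cont
  set J := ∫ t in (0 : ℝ)..h, ‖x t - x 0‖ ^ 2
  have pointwise : ∀ t ∈ Set.Icc 0 h,
      ‖x t - x 0‖ ^ 2 ≤ 3 * (K ^ 2 * J * t + ‖g (x 0)‖ ^ 2 * t ^ 2 + ‖w t‖ ^ 2) := by
    rintro t ⟨ht, hth⟩
    have hJ : ∫ s in (0 : ℝ)..t, ‖x s - x 0‖ ^ 2 ≤ J :=
      intervalIntegral.integral_mono_interval le_rfl ht hth (.of_forall fun s ↦ sq_nonneg _)
        (Continuous.intervalIntegrable (by fun_prop) _ _)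
    calc ‖x t - x 0‖ ^ 2 ≤ _ := hx.sq_norm_sub_le hg ht
      _ ≤ 3 * (K ^ 2 * t * J + t ^ 2 * ‖g (x 0)‖ ^ 2 + ‖w t‖ ^ 2) := by gcongr
      _ = _ := by ring
  have integrated : J ≤ 3 * (K ^ 2 * J * (h ^ 2 / 2) + ‖g (x 0)‖ ^ 2 * (h ^ 3 / 3) +
      ∫ t in (0 : ℝ)..h, ‖w t‖ ^ 2) := by
    refine (intervalIntegral.integral_mono_on hh (Continuous.intervalIntegrable (by fun_prop) _ _)
      (Continuous.intervalIntegrable (by fun_prop) _ _) pointwise).trans_eq ?_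
    rw [intervalIntegral.integral_const_mul, intervalIntegral.integral_add,
      intervalIntegral.integral_add, intervalIntegral.integral_const_mul,
      intervalIntegral.integral_const_mul, integral_id, integral_pow]
    · norm_num
    all_goals exact Continuous.intervalIntegrable (by fun_prop) _ _
  have absorbed : (K * h) ^ 2 * J ≤ (1 / 4) ^ 2 * J := by
    gcongr
    exact intervalIntegral.integral_nonneg hh fun s _ ↦ sq_nonneg _
  have noise : 0 ≤ ∫ t in (0 : ℝ)..h, ‖w t‖ ^ 2 :=
    intervalIntegral.integral_nonneg hh fun s _ ↦ sq_nonneg _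
  have drift : 0 ≤ h ^ 3 * ‖g (x 0)‖ ^ 2 := by positivity
  linarith

theorem sq_norm_eulerStep_sub_le (hx : IsIntegralSolution g w x) (hg : LipschitzWith K g)
    (hw : Continuous w) (hh : 0 ≤ h) (hKh : K * h ≤ 1 / 4) :
    ‖eulerStep g h (x 0) (w h) - x h‖ ^ 2 ≤
      4 / 3 * K ^ 2 * h * (h ^ 3 * ‖g (x 0)‖ ^ 2 + 3 * ∫ t in (0 : ℝ)..h, ‖w t‖ ^ 2) := by
  rw [hx.eulerStep_sub hg.continuous hh]
  calc ‖∫ s in (0 : ℝ)..h, (g (x s) - g (x 0))‖ ^ 2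
      ≤ K ^ 2 * h * ∫ t in (0 : ℝ)..h, ‖x t - x 0‖ ^ 2 :=
        sq_norm_integral_sub_le_of_lipschitzWith hg hx.cont hh
    _ ≤ K ^ 2 * h * (4 / 3 * (h ^ 3 * ‖g (x 0)‖ ^ 2 + 3 * ∫ t in (0 : ℝ)..h, ‖w t‖ ^ 2)) := by
        gcongr
        exact hx.integral_sq_norm_sub_le hg hw hh hKh
    _ = _ := by ring

end IsIntegralSolution

end IntegralEquation

section SecondMoments

lemma lintegral_enorm_sq_gaussianReal_zero (v : ℝ≥0) :
    ∫⁻ x, ‖x‖ₑ ^ 2 ∂gaussianReal 0 v = v := by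
  have hvar := (memLp_id_gaussianReal (μ := 0) (v := v) 2).ofReal_variance_eq
  rw [variance_id_gaussianReal, evariance] at hvar
  simpa using hvar.symm

lemma lintegral_enorm_sq_stdGaussian (d : ℕ) : ∫⁻ x, ‖x‖ₑ ^ 2 ∂_root_.stdGaussian d = d := by
  have coordinates (y : Fin d → ℝ) :
      ‖(EuclideanSpace.equiv (Fin d) ℝ).symm y‖ₑ ^ 2 = ∑ i, ‖y i‖ₑ ^ 2 := by
    simp only [← ofReal_norm, ← ENNReal.ofReal_pow (norm_nonneg _)]
    rw [EuclideanSpace.norm_sq_eq, ENNReal.ofReal_sum_of_nonneg fun _ _ ↦ sq_nonneg _]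
    rfl
  have marginal (i : Fin d) :
      ∫⁻ y, ‖y i‖ₑ ^ 2 ∂(Measure.pi fun _ : Fin d ↦ gaussianReal 0 1) = 1 := by
    rw [(measurePreserving_eval (fun _ : Fin d ↦ gaussianReal 0 1) i).lintegral_comp
      (f := fun z ↦ ‖z‖ₑ ^ 2) (by fun_prop), lintegral_enorm_sq_gaussianReal_zero, ENNReal.coe_one]
  rw [_root_.stdGaussian, lintegral_map (by fun_prop) (by fun_prop)]
  simp_rw [coordinates]
  rw [lintegral_finsetSum _ fun _ _ ↦ by fun_prop]
  simp [marginal]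

lemma sq_enorm_sqrt (x : ℝ) : ‖√x‖ₑ ^ 2 = ENNReal.ofReal x := by
  rw [Real.enorm_eq_ofReal (Real.sqrt_nonneg _), ← ENNReal.ofReal_pow (Real.sqrt_nonneg _),
    Real.sq_sqrt', ENNReal.ofReal_max, ENNReal.ofReal_zero, max_eq_left zero_le]

lemma lintegral_enorm_sq_isoGaussian (d : ℕ) (σ2 : ℝ) :
    ∫⁻ x, ‖x‖ₑ ^ 2 ∂isoGaussian d σ2 = ENNReal.ofReal σ2 * d := by
  rw [isoGaussian, lintegral_map (by fun_prop) (by fun_prop)]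
  simp_rw [enorm_smul, mul_pow]
  rw [lintegral_const_mul _ (by fun_prop), sq_enorm_sqrt, lintegral_enorm_sq_stdGaussian]

variable {d : ℕ} {Ω : Type*} {mΩ : MeasurableSpace Ω} {P : Measure Ω} {ℱ : Filtration ℝ mΩ}
  {B : ℝ → Ω → Euc d} {h t : ℝ}

namespace IsStdBrownian

lemma measurable (hB : IsStdBrownian P ℱ B) (t : ℝ) : Measurable (B t) :=
  ((hB.adapted t).mono (ℱ.le t)).measurable

lemma lintegral_enorm_sq (hB : IsStdBrownian P ℱ B) (ht : 0 ≤ t) :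
    ∫⁻ ω, ‖B t ω‖ₑ ^ 2 ∂P = ENNReal.ofReal t * d := by
  have law : P.map (B t) = isoGaussian d t := by
    simpa only [hB.init, sub_zero] using hB.incr_law 0 t le_rfl ht
  rw [← lintegral_enorm_sq_isoGaussian, ← law, lintegral_map (by fun_prop) (hB.measurable t)]

lemma lintegral_setLIntegral_enorm_sq [SFinite P] (hB : IsStdBrownian P ℱ B) (hh : 0 ≤ h) :
    ∫⁻ ω, (∫⁻ t in Set.Ioc 0 h, ‖B t ω‖ₑ ^ 2) ∂P = ENNReal.ofReal (h ^ 2 / 2) * d := by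
  have jointly_measurable : Measurable fun p : Ω × ℝ ↦ B p.2 p.1 :=
    (measurable_uncurry_of_continuous_of_measurable hB.cont hB.measurable).comp measurable_swap
  have integral_time : ∫⁻ t in Set.Ioc 0 h, ENNReal.ofReal t = ENNReal.ofReal (h ^ 2 / 2) := by
    rw [← ofReal_integral_eq_lintegral_ofReal (f := fun t ↦ t)
      (continuous_id.intervalIntegrable 0 h).1
      (ae_restrict_of_forall_mem measurableSet_Ioc fun t ht ↦ ht.1.le),
      ← intervalIntegral.integral_of_le hh]
    simp
  rw [lintegral_lintegral_swap (jointly_measurable.enorm.pow_const 2).aemeasurable,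
    setLIntegral_congr_fun measurableSet_Ioc fun t ht ↦ hB.lintegral_enorm_sq ht.1.le,
    lintegral_mul_const _ (by fun_prop), integral_time]

end IsStdBrownian

end SecondMoments

section StrongError

lemma ofReal_intervalIntegral_sq_norm {E : Type*} [NormedAddCommGroup E] {w : ℝ → E}
    {a b : ℝ} (hab : a ≤ b) (hw : Continuous w) :
    ENNReal.ofReal (∫ t in a..b, ‖w t‖ ^ 2) = ∫⁻ t in Set.Ioc a b, ‖w t‖ₑ ^ 2 := by
  rw [intervalIntegral.integral_of_le hab, ofReal_integral_eq_lintegral_ofReal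
    (Continuous.intervalIntegrable (by fun_prop) a b).1 (.of_forall fun t ↦ sq_nonneg _)]
  simp only [ENNReal.ofReal_pow (norm_nonneg _), ofReal_norm]

lemma lintegral_enorm_sq_eq_ofReal_integral {α E : Type*} {mα : MeasurableSpace α} {μ : Measure α}
    [NormedAddCommGroup E] {u : α → E} (hu : MemLp u 2 μ) :
    ∫⁻ a, ‖u a‖ₑ ^ 2 ∂μ = ENNReal.ofReal (∫ a, ‖u a‖ ^ 2 ∂μ) := by
  rw [ofReal_integral_eq_lintegral_ofReal (hu.integrable_norm_pow two_ne_zero)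
    (.of_forall fun a ↦ sq_nonneg _)]
  simp only [ENNReal.ofReal_pow (norm_nonneg _), ofReal_norm]

lemma integral_sq_norm_comp_le_of_lipschitzWith {α E F : Type*} {mα : MeasurableSpace α}
    {μ : Measure α} [NormedAddCommGroup E] [NormedAddCommGroup F] {g : E → F} {K : ℝ≥0}
    (hg : LipschitzWith K g) (hg0 : g 0 = 0) {u : α → E} (hu : MemLp u 2 μ) :
    ∫ a, ‖g (u a)‖ ^ 2 ∂μ ≤ K ^ 2 * ∫ a, ‖u a‖ ^ 2 ∂μ := by
  rw [← integral_const_mul]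
  refine integral_mono ((hg.comp_memLp hg0 hu).integrable_norm_pow two_ne_zero)
    ((hu.integrable_norm_pow two_ne_zero).const_mul _) fun a ↦ ?_
  change ‖g (u a)‖ ^ 2 ≤ K ^ 2 * ‖u a‖ ^ 2
  rw [← mul_pow]
  gcongr
  simpa only [hg0, sub_zero] using hg.norm_sub_le (u a) 0

variable {d : ℕ} {Ω : Type*} {mΩ : MeasurableSpace Ω} {P : Measure Ω}

lemma lintegral_enorm_sq_eulerStep_sub_le {E : Type*} [NormedAddCommGroup E] [NormedSpace ℝ E]
    [CompleteSpace E] {g : E → E} {K : ℝ≥0} (hg : LipschitzWith K g) {W X : ℝ → Ω → E}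
    (hX : ∀ ω, IsIntegralSolution g (W · ω) (X · ω)) (hW : ∀ ω, Continuous (W · ω))
    (hgX0 : AEStronglyMeasurable (fun ω ↦ g (X 0 ω)) P) {h : ℝ} (hh : 0 ≤ h)
    (hKh : K * h ≤ 1 / 4) :
    ∫⁻ ω, ‖eulerStep g h (X 0 ω) (W h ω) - X h ω‖ₑ ^ 2 ∂P ≤
      ENNReal.ofReal (4 / 3 * K ^ 2 * h) * (ENNReal.ofReal (h ^ 3) * ∫⁻ ω, ‖g (X 0 ω)‖ₑ ^ 2 ∂P +
        3 * ∫⁻ ω, (∫⁻ t in Set.Ioc 0 h, ‖W t ω‖ₑ ^ 2) ∂P) := by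
  have pathwise (ω : Ω) : ‖eulerStep g h (X 0 ω) (W h ω) - X h ω‖ₑ ^ 2 ≤
      ENNReal.ofReal (4 / 3 * K ^ 2 * h) * (ENNReal.ofReal (h ^ 3) * ‖g (X 0 ω)‖ₑ ^ 2 +
        3 * ∫⁻ t in Set.Ioc 0 h, ‖W t ω‖ₑ ^ 2) := by
    have noise_nonneg : 0 ≤ ∫ t in (0 : ℝ)..h, ‖W t ω‖ ^ 2 :=
      intervalIntegral.integral_nonneg hh fun t _ ↦ sq_nonneg _
    have bound := (hX ω).sq_norm_eulerStep_sub_le hg (hW ω) hh hKh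
    rw [← ofReal_intervalIntegral_sq_norm hh (hW ω), ← ofReal_norm, ← ofReal_norm,
      ← ENNReal.ofReal_pow (norm_nonneg _), ← ENNReal.ofReal_pow (norm_nonneg _),
      ← ENNReal.ofReal_ofNat 3, ← ENNReal.ofReal_mul (by positivity),
      ← ENNReal.ofReal_mul (by positivity), ← ENNReal.ofReal_add (by positivity) (by positivity),
      ← ENNReal.ofReal_mul (by positivity)]
    exact ENNReal.ofReal_le_ofReal bound
  refine (lintegral_mono pathwise).trans_eq ?_
  rw [lintegral_const_mul' _ _ ENNReal.ofReal_ne_top,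
    lintegral_add_left' ((hgX0.enorm.pow_const 2).const_mul _),
    lintegral_const_mul' _ _ ENNReal.ofReal_ne_top, lintegral_const_mul' _ _ ENNReal.ofNat_ne_top]

theorem eulerStep_strong_error_of_lipschitzWith [IsProbabilityMeasure P] {ℱ : Filtration ℝ mΩ}
    {g : Euc d → Euc d} {K : ℝ≥0} (hg : LipschitzWith K g) {B X : ℝ → Ω → Euc d}
    (hB : IsStdBrownian P ℱ B) (hX : ∀ ω, IsIntegralSolution g (fun t ↦ √2 • B t ω) (X · ω))
    (hgX0 : MemLp (fun ω ↦ g (X 0 ω)) 2 P) {h : ℝ} (hh : 0 ≤ h) (hKh : K * h ≤ 1 / 4) :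
    (∫⁻ ω, ‖eulerStep g h (X 0 ω) (√2 • B h ω) - X h ω‖ₑ ^ 2 ∂P) ^ (1 / 2 : ℝ) ≤
      ENNReal.ofReal (2 * K * √(d + h / 3 * ∫ ω, ‖g (X 0 ω)‖ ^ 2 ∂P) * h ^ (3 / 2 : ℝ)) := by
  set a := ∫ ω, ‖g (X 0 ω)‖ ^ 2 ∂P
  have : 0 ≤ a := integral_nonneg fun ω ↦ sq_nonneg _
  have noise : ∫⁻ ω, (∫⁻ t in Set.Ioc 0 h, ‖√2 • B t ω‖ₑ ^ 2) ∂P = ENNReal.ofReal (h ^ 2 * d) := by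
    simp_rw [enorm_smul, mul_pow, sq_enorm_sqrt]
    simp_rw [lintegral_const_mul' _ _ ENNReal.ofReal_ne_top]
    rw [hB.lintegral_setLIntegral_enorm_sq hh, ← mul_assoc, ← ENNReal.ofReal_mul zero_le_two,
      mul_div_cancel₀ _ two_ne_zero, ENNReal.ofReal_mul (sq_nonneg h), ENNReal.ofReal_natCast]
  have hcube : (h ^ (3 / 2 : ℝ)) ^ 2 = h ^ 3 := by
    rw [← Real.rpow_mul_natCast hh]
    norm_num
  have noise_cont (ω : Ω) : Continuous fun t ↦ √2 • B t ω := (hB.cont ω).const_smul √2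
  have second_moment : ∫⁻ ω, ‖eulerStep g h (X 0 ω) (√2 • B h ω) - X h ω‖ₑ ^ 2 ∂P ≤
      ENNReal.ofReal ((2 * K * √(d + h / 3 * a) * h ^ (3 / 2 : ℝ)) ^ 2) := by
    refine (lintegral_enorm_sq_eulerStep_sub_le hg hX noise_cont hgX0.aestronglyMeasurable
      hh hKh).trans_eq ?_
    rw [noise, lintegral_enorm_sq_eq_ofReal_integral hgX0, ← ENNReal.ofReal_ofNat 3,
      ← ENNReal.ofReal_mul (by positivity), ← ENNReal.ofReal_mul (by positivity),
      ← ENNReal.ofReal_add (by positivity) (by positivity), ← ENNReal.ofReal_mul (by positivity),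
      mul_pow, mul_pow, hcube, Real.sq_sqrt (by positivity)]
    congr 1
    ring
  refine (ENNReal.rpow_le_rpow second_moment (by norm_num)).trans_eq ?_
  rw [ENNReal.ofReal_rpow_of_nonneg (by positivity) (by norm_num), ← Real.sqrt_eq_rpow,
    Real.sqrt_sq (by positivity)]

theorem lmc_local_strong_error_general [IsProbabilityMeasure P] {ℱ : Filtration ℝ mΩ}
    {f : Euc d → ℝ} {m L : ℝ} (hL : 0 ≤ L) (hmL : -L ≤ m) (hf : ContDiff ℝ 2 f)
    (hHess : HessianBounds m L f) (hgrad0 : gradient f 0 = 0) {B X : ℝ → Ω → Euc d}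
    (hB : IsStdBrownian P ℱ B) (hX : IsLangevinSolution ℱ f B X) (hX0 : MemLp (X 0) 2 P) {h : ℝ}
    (hh : 0 ≤ h) (hLh : L * h ≤ 1 / 4) :
    (∫⁻ ω, ‖eulerStep (gradient f) h (X 0 ω) (√2 • B h ω) - X h ω‖ₑ ^ 2 ∂P) ^ (1 / 2 : ℝ) ≤
      ENNReal.ofReal
        (2 * L * √(d + L ^ 2 * h / 3 * ∫ ω, ‖X 0 ω‖ ^ 2 ∂P) * h ^ (3 / 2 : ℝ)) := by
  lift L to ℝ≥0 using hL
  have hg : LipschitzWith L (gradient f) := hHess.lipschitzWith_gradient_s3 hf hmL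
  refine (eulerStep_strong_error_of_lipschitzWith hg hB (fun ω ↦ ⟨hX.cont ω, hX.eqn ω⟩)
    (hg.comp_memLp hgrad0 hX0) hh hLh).trans (ENNReal.ofReal_le_ofReal ?_)
  gcongr 2 * L * √(d + ?_) * _
  calc h / 3 * ∫ ω, ‖gradient f (X 0 ω)‖ ^ 2 ∂P
      ≤ h / 3 * (L ^ 2 * ∫ ω, ‖X 0 ω‖ ^ 2 ∂P) := by
        gcongr
        exact integral_sq_norm_comp_le_of_lipschitzWith hg hgrad0 hX0
    _ = L ^ 2 * h / 3 * ∫ ω, ‖X 0 ω‖ ^ 2 ∂P := by ring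

lemma stepSize_bounds {m L h : ℝ} (hm : 0 < m) (hmL : m ≤ L) (hh : h ≤ 1 / (4 * (L / m) * L)) :
    L * h ≤ 1 / 4 ∧ L ^ 2 * h / 3 ≤ m / 2 := by
  have hL : 0 < L := hm.trans_le hmL
  have hLLh : L * (L * h) ≤ m / 4 := by
    rw [le_div_iff₀ (by positivity)] at hh
    field_simp at hh
    linarith
  exact ⟨le_of_mul_le_mul_left (by linarith) hL, by linarith⟩

end StrongError

/-- **Local strong error of LMC** (Lemma 5).
If `f` is `m`-strongly convex and `L`-smooth (`0 < m ≤ L`), `∇f(0) = 0`, `X` solves the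
overdamped Langevin dynamics with square-integrable initial value `x = X_0`, and
`x̄₁ = x - h ∇f(x) + √2 B_h` is the one-step LMC update driven by the same Brownian increment,
then for every `0 ≤ h ≤ 1/(4κL)` (where `κ = L/m`):
`(E‖x̄₁ - X_h‖²)^{1/2} ≤ 2L (d + (m/2) E‖x‖²)^{1/2} h^{3/2}`. -/
theorem lmc_local_strong_error
    {d : ℕ} {Ω : Type*} {mΩ : MeasurableSpace Ω} {P : Measure Ω} [IsProbabilityMeasure P]
    {ℱ : Filtration ℝ mΩ} {f : Euc d → ℝ} {m L : ℝ}
    (hm : 0 < m) (hmL : m ≤ L) (hf : ContDiff ℝ 2 f) (hHess : HessianBounds m L f)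
    (hgrad0 : gradient f 0 = 0)
    {B X : ℝ → Ω → Euc d} (hB : IsStdBrownian P ℱ B)
    (hX : IsLangevinSolution ℱ f B X) (hX0 : MemLp (X 0) 2 P)
    {h : ℝ} (hh0 : 0 ≤ h) (hh1 : h ≤ 1 / (4 * (L / m) * L)) :
    (∫⁻ ω, (‖(X 0 ω - h • gradient f (X 0 ω) + Real.sqrt 2 • B h ω) - X h ω‖₊ : ℝ≥0∞) ^ 2
        ∂P) ^ (1/2 : ℝ) ≤
      ENNReal.ofReal
        (2 * L * Real.sqrt (d + m / 2 * ∫ ω, ‖X 0 ω‖ ^ 2 ∂P) * h ^ ((3:ℝ)/2)) := by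
  have hL : 0 ≤ L := hm.le.trans hmL
  obtain ⟨hLh, hL2h⟩ := stepSize_bounds hm hmL hh1
  refine (lmc_local_strong_error_general hL ((neg_nonpos.2 hL).trans hm.le) hf hHess hgrad0
    hB hX hX0 hh0 hLh).trans (ENNReal.ofReal_le_ofReal ?_)
  gcongr
end

section
/- (Boundedness of LMC iterates, Lemma 7) Let f : ℝ^d → ℝ be twice continuously differentiable with m·I ≼ ∇²f(x) ≼ L·I for all x (0 < m ≤ L), κ = L/m, and ∇f(0) = 0. Let (x̄_k) be the LMC iterates with step size h started from a square-integrable x̄₀ = x₀. Then for every h with 0 ≤ h ≤ 1/(4κL) and every k ≥ 0: E‖x̄_k‖² ≤ E‖x₀‖² + 8d/(7m). -/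
open MeasureTheory ProbabilityTheory Real
open scoped ENNReal NNReal

/-!
Strong monotonicity and linear growth of the drift make the deterministic step contract,
`‖x - h∇f(x)‖² ≤ (1 - ρ) ‖x‖²` with `ρ = h(2m - hL²)`, and the fresh noise is centered and
independent of the current iterate, so no cross term survives and `a k = E‖x̄_k‖²` satisfies
`a (k + 1) ≤ (1 - ρ) a k + 2hd`. The right-hand side is a convex combination of `a k` and
`2d / (2m - hL²)`, so the maximum of `a 0` and the latter bounds every `a k`; the step size
restriction gives `hL² ≤ m / 4`, hence `2d / (2m - hL²) ≤ 8d / (7m)`.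
-/

section Gradient

variable {E : Type*} [NormedAddCommGroup E]

lemma norm_le_of_symm_of_apply_self_le [NormedSpace ℝ E] {B : E →L[ℝ] E →L[ℝ] ℝ} {L : ℝ}
    (hL : 0 ≤ L) (hsymm : ∀ v w, B v w = B w v) (hnonneg : ∀ v, 0 ≤ B v v)
    (hle : ∀ v, B v v ≤ L * ‖v‖ ^ 2) : ‖B‖ ≤ L := by
  refine B.opNorm_le_bound₂ hL fun v w ↦ abs_le_of_sq_le_sq ?_ (by positivity)
  calc B v w ^ 2 ≤ B v v * B w w :=
        B.toBilinForm.apply_sq_le_of_symm hnonneg ⟨hsymm⟩ v w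
    _ ≤ (L * ‖v‖ ^ 2) * (L * ‖w‖ ^ 2) := by
        gcongr
        exacts [hnonneg w, hle v, hle w]
    _ = (L * ‖v‖ * ‖w‖) ^ 2 := by ring

variable [InnerProductSpace ℝ E] [CompleteSpace E] {f : E → ℝ}

lemma norm_gradient_sub_gradient (f : E → ℝ) (x y : E) :
    ‖gradient f x - gradient f y‖ = ‖fderiv ℝ f x - fderiv ℝ f y‖ := by
  rw [← toDual_gradient, ← toDual_gradient, ← map_sub, LinearIsometryEquiv.norm_map]

lemma continuous_gradient (hf : ContDiff ℝ 1 f) : Continuous (gradient f) :=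
  (InnerProductSpace.toDual ℝ E).symm.continuous.comp (hf.continuous_fderiv one_ne_zero)

lemma mul_norm_sub_sq_le_inner_gradient_sub {m : ℝ} (hf : ContDiff ℝ 2 f)
    (hm : ∀ z v, m * ‖v‖ ^ 2 ≤ iteratedFDeriv ℝ 2 f z ![v, v]) (x y : E) :
    m * ‖x - y‖ ^ 2 ≤ inner ℝ (gradient f x - gradient f y) (x - y) := by
  have hderiv (z : E) : HasFDerivAt (fun z ↦ fderiv ℝ f z (x - y))
      ((fderiv ℝ (fderiv ℝ f) z).flip (x - y)) z := by
    have hd : DifferentiableAt ℝ (fderiv ℝ f) z :=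
      (hf.fderiv_right (m := 1) le_rfl).differentiable one_ne_zero z
    simpa using hd.hasFDerivAt.clm_apply (hasFDerivAt_const (x - y) z)
  obtain ⟨z, -, hz⟩ := domain_mvt (fun z _ ↦ (hderiv z).hasFDerivWithinAt) convex_univ
    (Set.mem_univ y) (Set.mem_univ x)
  calc m * ‖x - y‖ ^ 2 ≤ fderiv ℝ (fderiv ℝ f) z (x - y) (x - y) := by
        simpa [iteratedFDeriv_two_apply] using hm z (x - y)
    _ = inner ℝ (gradient f x - gradient f y) (x - y) := by
        rw [inner_sub_left, inner_gradient_left, inner_gradient_left, hz,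
          ContinuousLinearMap.flip_apply]

lemma norm_gradient_sub_le {L : ℝ} (hL : 0 ≤ L) (hf : ContDiff ℝ 2 f)
    (hnonneg : ∀ z v, 0 ≤ iteratedFDeriv ℝ 2 f z ![v, v])
    (hle : ∀ z v, iteratedFDeriv ℝ 2 f z ![v, v] ≤ L * ‖v‖ ^ 2) (x y : E) :
    ‖gradient f x - gradient f y‖ ≤ L * ‖x - y‖ := by
  have hbound (z : E) : ‖fderiv ℝ (fderiv ℝ f) z‖ ≤ L := by
    refine norm_le_of_symm_of_apply_self_le hL
      (hf.contDiffAt.isSymmSndFDerivAt (by simp)) (fun v ↦ ?_) fun v ↦ ?_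
    · simpa [iteratedFDeriv_two_apply] using hnonneg z v
    · simpa [iteratedFDeriv_two_apply] using hle z v
  rw [norm_gradient_sub_gradient]
  exact convex_univ.norm_image_sub_le_of_norm_fderiv_le
    (fun z _ ↦ (hf.fderiv_right (m := 1) le_rfl).differentiable one_ne_zero z)
    (fun z _ ↦ hbound z) (Set.mem_univ y) (Set.mem_univ x)

end Gradient

namespace HessianBounds

variable {d : ℕ} {m L : ℝ} {f : Euc d → ℝ}

lemma mul_norm_sq_le_inner_gradient (hHess : HessianBounds m L f) (hf : ContDiff ℝ 2 f)
    (hgrad0 : gradient f 0 = 0) (x : Euc d) : m * ‖x‖ ^ 2 ≤ inner ℝ (gradient f x) x := by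
  simpa [hgrad0] using mul_norm_sub_sq_le_inner_gradient_sub hf (fun z v ↦ (hHess z v).1) x 0

lemma norm_gradient_le (hHess : HessianBounds m L f) (hm : 0 ≤ m) (hL : 0 ≤ L)
    (hf : ContDiff ℝ 2 f) (hgrad0 : gradient f 0 = 0) (x : Euc d) :
    ‖gradient f x‖ ≤ L * ‖x‖ := by
  have hnonneg (z v : Euc d) : 0 ≤ iteratedFDeriv ℝ 2 f z ![v, v] :=
    (by positivity : 0 ≤ m * ‖v‖ ^ 2).trans (hHess z v).1
  simpa [hgrad0] using norm_gradient_sub_le hL hf hnonneg (fun z v ↦ (hHess z v).2) x 0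

end HessianBounds

section GaussianMoments

lemma stdGaussian_eq_stdGaussian_euclideanSpace (d : ℕ) :
    _root_.stdGaussian d = ProbabilityTheory.stdGaussian (Euc d) :=
  map_pi_eq_stdGaussian

lemma integral_norm_sq_stdGaussian (E : Type*) [NormedAddCommGroup E] [InnerProductSpace ℝ E]
    [FiniteDimensional ℝ E] [MeasurableSpace E] [BorelSpace E] :
    ∫ x, ‖x‖ ^ 2 ∂ProbabilityTheory.stdGaussian E = Module.finrank ℝ E := by
  let b := stdOrthonormalBasis ℝ E
  have hint (i) : Integrable (fun x ↦ ‖inner ℝ (b i) x‖ ^ 2) (ProbabilityTheory.stdGaussian E) :=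
    (IsGaussian.memLp_two_id.const_inner (b i)).integrable_norm_pow two_ne_zero
  have hone (i) : ∫ x, ‖inner ℝ (b i) x‖ ^ 2 ∂ProbabilityTheory.stdGaussian E = 1 := by
    have hvar := variance_dual_stdGaussian (innerSL ℝ (b i))
    rw [variance_of_integral_eq_zero (by fun_prop) (integral_strongDual_stdGaussian _)] at hvar
    simpa using hvar
  simp_rw [← b.sum_sq_norm_inner_right]
  rw [integral_finsetSum _ fun i _ ↦ hint i, Finset.sum_congr rfl fun i _ ↦ hone i]
  simp

variable {d : ℕ} {Ω : Type*} {mΩ : MeasurableSpace Ω} {P : Measure Ω} {Z : Ω → Euc d}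

lemma memLp_two_of_hasLaw_stdGaussian (hZ : HasLaw Z (_root_.stdGaussian d) P) : MemLp Z 2 P := by
  rw [stdGaussian_eq_stdGaussian_euclideanSpace] at hZ
  exact hZ.hasGaussianLaw.memLp_two

lemma integral_eq_zero_of_hasLaw_stdGaussian (hZ : HasLaw Z (_root_.stdGaussian d) P) :
    ∫ ω, Z ω ∂P = 0 := by
  rw [stdGaussian_eq_stdGaussian_euclideanSpace] at hZ
  exact hZ.integral_eq.trans integral_id_stdGaussian

lemma integral_norm_sq_of_hasLaw_stdGaussian (hZ : HasLaw Z (_root_.stdGaussian d) P) :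
    ∫ ω, ‖Z ω‖ ^ 2 ∂P = d := by
  rw [stdGaussian_eq_stdGaussian_euclideanSpace] at hZ
  calc ∫ ω, ‖Z ω‖ ^ 2 ∂P = ∫ x, ‖x‖ ^ 2 ∂ProbabilityTheory.stdGaussian (Euc d) :=
        hZ.integral_comp (f := fun x ↦ ‖x‖ ^ 2) (by fun_prop)
    _ = d := by rw [integral_norm_sq_stdGaussian, finrank_euclideanSpace_fin]

end GaussianMoments

section Independence

variable {Ω : Type*} {mΩ : MeasurableSpace Ω} {P : Measure Ω}

lemma integral_norm_add_sq_of_indepFun [IsFiniteMeasure P] {E : Type*} [NormedAddCommGroup E]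
    [InnerProductSpace ℝ E] [CompleteSpace E] [MeasurableSpace E] [BorelSpace E] {Y Z : Ω → E}
    (hY : MemLp Y 2 P) (hZ : MemLp Z 2 P) (hYZ : IndepFun Y Z P) (hZ0 : ∫ ω, Z ω ∂P = 0) :
    ∫ ω, ‖Y ω + Z ω‖ ^ 2 ∂P = ∫ ω, ‖Y ω‖ ^ 2 ∂P + ∫ ω, ‖Z ω‖ ^ 2 ∂P := by
  have hY1 := hY.integrable one_le_two
  have hZ1 := hZ.integrable one_le_two
  have hY2 := hY.integrable_norm_pow two_ne_zero
  have hZ2 := hZ.integrable_norm_pow two_ne_zero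
  have hinner : Integrable (fun ω ↦ 2 * inner ℝ (Y ω) (Z ω)) P :=
    (hYZ.integrable_bilin hY1 hZ1 (innerSL ℝ)).const_mul 2
  have hcross : ∫ ω, inner ℝ (Y ω) (Z ω) ∂P = 0 :=
    (hYZ.integral_bilin hY1 hZ1 (innerSL ℝ)).trans (by simp [hZ0])
  calc ∫ ω, ‖Y ω + Z ω‖ ^ 2 ∂P
      = ∫ ω, (‖Y ω‖ ^ 2 + 2 * inner ℝ (Y ω) (Z ω) + ‖Z ω‖ ^ 2) ∂P := by
        simp_rw [norm_add_sq_real]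
    _ = ∫ ω, ‖Y ω‖ ^ 2 ∂P + 2 * ∫ ω, inner ℝ (Y ω) (Z ω) ∂P + ∫ ω, ‖Z ω‖ ^ 2 ∂P := by
        rw [integral_add (hY2.fun_add hinner) hZ2, integral_add hY2 hinner, integral_const_mul]
    _ = ∫ ω, ‖Y ω‖ ^ 2 ∂P + ∫ ω, ‖Z ω‖ ^ 2 ∂P := by rw [hcross, mul_zero, add_zero]

variable {β : Option ℕ → Type*} [∀ i, MeasurableSpace (β i)] {ξ : ∀ i, Ω → β i}
  {φ : ∀ k : ℕ, β none × β (some (k + 1)) → β none} {X : ℕ → Ω → β none}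

lemma exists_measurable_eq_comp_of_succ_eq (hφ : ∀ k, Measurable (φ k)) (hX0 : X 0 = ξ none)
    (hX : ∀ k, X (k + 1) = fun ω ↦ φ k (X k ω, ξ (some (k + 1)) ω)) (k : ℕ) :
    ∃ G : (∀ i : Finset.insertNone (Finset.Iic k), β i) → β none,
      Measurable G ∧ X k = fun ω ↦ G fun i ↦ ξ i ω := by
  induction k with
  | zero => exact ⟨fun p ↦ p ⟨none, by simp⟩, measurable_pi_apply _, hX0⟩
  | succ k ih =>
    obtain ⟨G, hG, hXG⟩ := ih
    have hsub : Finset.insertNone (Finset.Iic k) ⊆ Finset.insertNone (Finset.Iic (k + 1)) :=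
      Finset.insertNone.monotone (Finset.Iic_subset_Iic.2 k.le_succ)
    refine ⟨fun p ↦ φ k (G fun i ↦ p ⟨i, hsub i.2⟩, p ⟨some (k + 1), by simp⟩),
      (hφ k).comp ((hG.comp ?_).prodMk (measurable_pi_apply _)), ?_⟩
    · exact measurable_pi_lambda _ fun i ↦ measurable_pi_apply _
    · rw [hX k, hXG]

lemma indepFun_of_succ_eq (hξ : ∀ i, AEMeasurable (ξ i) P) (hindep : iIndepFun ξ P)
    (hφ : ∀ k, Measurable (φ k)) (hX0 : X 0 = ξ none)
    (hX : ∀ k, X (k + 1) = fun ω ↦ φ k (X k ω, ξ (some (k + 1)) ω)) (k : ℕ) :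
    IndepFun (X k) (ξ (some (k + 1))) P := by
  obtain ⟨G, hG, hXG⟩ := exists_measurable_eq_comp_of_succ_eq hφ hX0 hX k
  have hdisj : Disjoint (Finset.insertNone (Finset.Iic k)) {some (k + 1)} := by simp
  rw [hXG]
  exact (hindep.indepFun_finset₀ _ _ hdisj hξ).comp hG
    (measurable_pi_apply ⟨some (k + 1), Finset.mem_singleton_self _⟩)

end Independence

lemma le_max_of_succ_le_convex_comb {a : ℕ → ℝ} {ρ C : ℝ} (hρ0 : 0 ≤ ρ) (hρ1 : ρ ≤ 1)
    (ha : ∀ k, a (k + 1) ≤ (1 - ρ) * a k + ρ * C) (k : ℕ) : a k ≤ max (a 0) C := by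
  induction k with
  | zero => exact le_max_left _ _
  | succ k ih =>
    calc a (k + 1) ≤ (1 - ρ) * a k + ρ * C := ha k
      _ ≤ (1 - ρ) * max (a 0) C + ρ * max (a 0) C := by
          have := sub_nonneg.2 hρ1
          gcongr
          exact le_max_right _ _
      _ = max (a 0) C := by ring

lemma lintegral_enorm_sq_eq_ofReal_integral_s5 {Ω E : Type*} {mΩ : MeasurableSpace Ω} {P : Measure Ω}
    [NormedAddCommGroup E] {X : Ω → E} (hX : MemLp X 2 P) :
    ∫⁻ ω, ‖X ω‖ₑ ^ 2 ∂P = ENNReal.ofReal (∫ ω, ‖X ω‖ ^ 2 ∂P) := by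
  rw [ofReal_integral_eq_lintegral_ofReal (hX.integrable_norm_pow two_ne_zero)
    (ae_of_all _ fun ω ↦ sq_nonneg ‖X ω‖)]
  simp_rw [ENNReal.ofReal_pow (norm_nonneg _), ofReal_norm]

lemma norm_sub_smul_sq_le {E : Type*} [NormedAddCommGroup E] [InnerProductSpace ℝ E] {x v : E}
    {m L h : ℝ} (hh : 0 ≤ h) (hinner : m * ‖x‖ ^ 2 ≤ inner ℝ v x) (hnorm : ‖v‖ ≤ L * ‖x‖) :
    ‖x - h • v‖ ^ 2 ≤ (1 - h * (2 * m - h * L ^ 2)) * ‖x‖ ^ 2 := by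
  calc ‖x - h • v‖ ^ 2 = ‖x‖ ^ 2 - 2 * (h * inner ℝ v x) + h ^ 2 * ‖v‖ ^ 2 := by
        rw [norm_sub_sq_real, inner_smul_right, real_inner_comm, norm_smul, mul_pow, norm_eq_abs,
          sq_abs]
    _ ≤ ‖x‖ ^ 2 - 2 * (h * (m * ‖x‖ ^ 2)) + h ^ 2 * (L * ‖x‖) ^ 2 := by gcongr
    _ = (1 - h * (2 * m - h * L ^ 2)) * ‖x‖ ^ 2 := by ring

section EulerScheme

variable {Ω E : Type*} {mΩ : MeasurableSpace Ω} {P : Measure Ω} [NormedAddCommGroup E]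
  [MeasurableSpace E] [BorelSpace E] {b : E → E} {m L h c : ℝ}

lemma memLp_sub_smul_comp [NormedSpace ℝ E] {p : ℝ≥0∞} {Y : Ω → E} (hb : StronglyMeasurable b)
    (hbL : ∀ x, ‖b x‖ ≤ L * ‖x‖) (hY : MemLp Y p P) :
    MemLp (fun ω ↦ Y ω - h • b (Y ω)) p P := by
  have hbY : AEStronglyMeasurable (fun ω ↦ b (Y ω)) P :=
    hb.aestronglyMeasurable.comp_aemeasurable hY.1.aemeasurable
  exact hY.sub ((hY.of_le_mul hbY (ae_of_all _ fun ω ↦ hbL (Y ω))).const_smul h)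

lemma memLp_of_succ_eq_sub_smul_add [NormedSpace ℝ E] {p : ℝ≥0∞} {X ξ : ℕ → Ω → E}
    (hb : StronglyMeasurable b) (hbL : ∀ x, ‖b x‖ ≤ L * ‖x‖) (hX0 : MemLp (X 0) p P)
    (hξ : ∀ k, MemLp (ξ (k + 1)) p P)
    (hX : ∀ k, X (k + 1) = fun ω ↦ X k ω - h • b (X k ω) + c • ξ (k + 1) ω) (k : ℕ) :
    MemLp (X k) p P := by
  induction k with
  | zero => exact hX0
  | succ k ih =>
    rw [hX k]
    exact (memLp_sub_smul_comp hb hbL ih).add ((hξ k).const_smul c)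

lemma indepFun_of_succ_eq_sub_smul_add [NormedSpace ℝ E] [SecondCountableTopology E]
    {X ξ : ℕ → Ω → E} (hb : Measurable b) (hX0 : AEMeasurable (X 0) P)
    (hξ : ∀ k, AEMeasurable (ξ k) P) (hindep : iIndepFun (fun i : Option ℕ ↦ i.elim (X 0) ξ) P)
    (hX : ∀ k, X (k + 1) = fun ω ↦ X k ω - h • b (X k ω) + c • ξ (k + 1) ω) (k : ℕ) :
    IndepFun (X k) (ξ (k + 1)) P := by
  have hmeas : ∀ i : Option ℕ, AEMeasurable (i.elim (X 0) ξ) P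
    | none => hX0
    | some k => hξ k
  exact indepFun_of_succ_eq (β := fun _ ↦ E) (φ := fun _ p ↦ p.1 - h • b p.1 + c • p.2)
    hmeas hindep (by fun_prop) rfl hX k

variable [InnerProductSpace ℝ E] [CompleteSpace E] [IsFiniteMeasure P]

lemma integral_norm_sub_smul_add_sq_le {Y Z : Ω → E} (hb : StronglyMeasurable b)
    (hbm : ∀ x, m * ‖x‖ ^ 2 ≤ inner ℝ (b x) x) (hbL : ∀ x, ‖b x‖ ≤ L * ‖x‖) (hh : 0 ≤ h)
    (hY : MemLp Y 2 P) (hZ : MemLp Z 2 P) (hYZ : IndepFun Y Z P) (hZ0 : ∫ ω, Z ω ∂P = 0) :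
    ∫ ω, ‖Y ω - h • b (Y ω) + c • Z ω‖ ^ 2 ∂P ≤
      (1 - h * (2 * m - h * L ^ 2)) * ∫ ω, ‖Y ω‖ ^ 2 ∂P + c ^ 2 * ∫ ω, ‖Z ω‖ ^ 2 ∂P := by
  have hstep : MemLp (fun ω ↦ Y ω - h • b (Y ω)) 2 P := memLp_sub_smul_comp hb hbL hY
  have hindep : IndepFun (fun ω ↦ Y ω - h • b (Y ω)) (fun ω ↦ c • Z ω) P :=
    hYZ.comp (measurable_id.sub_stronglyMeasurable (hb.const_smul h)) (measurable_const_smul c)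
  have hnoise : MemLp (fun ω ↦ c • Z ω) 2 P := hZ.const_smul c
  rw [integral_norm_add_sq_of_indepFun hstep hnoise hindep
    (by rw [integral_smul, hZ0, smul_zero])]
  simp_rw [norm_smul, mul_pow, norm_eq_abs, sq_abs]
  rw [← integral_const_mul, ← integral_const_mul]
  gcongr
  · exact hstep.integrable_norm_pow two_ne_zero
  · exact (hY.integrable_norm_pow two_ne_zero).const_mul _
  · exact fun ω ↦ norm_sub_smul_sq_le hh (hbm _) (hbL _)

theorem lmc_iterates_bounded_general {X ξ : ℕ → Ω → E} {σ2 : ℝ} (hb : StronglyMeasurable b)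
    (hbm : ∀ x, m * ‖x‖ ^ 2 ≤ inner ℝ (b x) x) (hbL : ∀ x, ‖b x‖ ≤ L * ‖x‖) (hmL : m ≤ L)
    (hX0 : MemLp (X 0) 2 P) (hξ : ∀ k, MemLp (ξ (k + 1)) 2 P)
    (hξ0 : ∀ k, ∫ ω, ξ (k + 1) ω ∂P = 0) (hξ2 : ∀ k, ∫ ω, ‖ξ (k + 1) ω‖ ^ 2 ∂P ≤ σ2)
    (hindep : ∀ k, IndepFun (X k) (ξ (k + 1)) P) (hh : 0 ≤ h) (hhm : h * L ^ 2 < 2 * m)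
    (hX : ∀ k, X (k + 1) = fun ω ↦ X k ω - h • b (X k ω) + √(2 * h) • ξ (k + 1) ω) (k : ℕ) :
    ∫⁻ ω, ‖X k ω‖ₑ ^ 2 ∂P ≤
      ENNReal.ofReal (max (∫ ω, ‖X 0 ω‖ ^ 2 ∂P) (2 * σ2 / (2 * m - h * L ^ 2))) := by
  have hmem := memLp_of_succ_eq_sub_smul_add hb hbL hX0 hξ hX
  have hrate : 0 < 2 * m - h * L ^ 2 := sub_pos.2 hhm
  have hrate_le : h * (2 * m - h * L ^ 2) ≤ 1 := by
    nlinarith [sq_nonneg (1 - h * L), mul_le_mul_of_nonneg_left hmL hh]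
  rw [lintegral_enorm_sq_eq_ofReal_integral_s5 (hmem k)]
  refine ENNReal.ofReal_le_ofReal (le_max_of_succ_le_convex_comb
    (a := fun k ↦ ∫ ω, ‖X k ω‖ ^ 2 ∂P) (by positivity) hrate_le (fun k ↦ ?_) k)
  calc ∫ ω, ‖X (k + 1) ω‖ ^ 2 ∂P
      ≤ (1 - h * (2 * m - h * L ^ 2)) * ∫ ω, ‖X k ω‖ ^ 2 ∂P +
          √(2 * h) ^ 2 * ∫ ω, ‖ξ (k + 1) ω‖ ^ 2 ∂P := by
        rw [hX k]
        exact integral_norm_sub_smul_add_sq_le hb hbm hbL hh (hmem k) (hξ k) (hindep k) (hξ0 k)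
    _ ≤ (1 - h * (2 * m - h * L ^ 2)) * ∫ ω, ‖X k ω‖ ^ 2 ∂P + 2 * h * σ2 := by
        rw [sq_sqrt (by positivity)]
        gcongr
        exact hξ2 k
    _ = (1 - h * (2 * m - h * L ^ 2)) * ∫ ω, ‖X k ω‖ ^ 2 ∂P +
          h * (2 * m - h * L ^ 2) * (2 * σ2 / (2 * m - h * L ^ 2)) := by
        field_simp

end EulerScheme

section StepSize

variable {m L h : ℝ}

lemma mul_sq_le_div_four_of_le_one_div (hm : 0 < m) (hL : 0 < L)
    (hh : h ≤ 1 / (4 * (L / m) * L)) : h * L ^ 2 ≤ m / 4 := by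
  calc h * L ^ 2 ≤ 1 / (4 * (L / m) * L) * L ^ 2 := by gcongr
    _ = m / 4 := by field_simp

lemma two_mul_div_le_of_mul_sq_le_div_four {s : ℝ} (hm : 0 < m) (hs : 0 ≤ s)
    (hh : h * L ^ 2 ≤ m / 4) : 2 * s / (2 * m - h * L ^ 2) ≤ 8 * s / (7 * m) := by
  calc 2 * s / (2 * m - h * L ^ 2) ≤ 2 * s / (7 / 4 * m) := by
        gcongr
        linarith
    _ = 8 * s / (7 * m) := by
        field_simp
        ring

end StepSize

/-- **Boundedness of LMC iterates** (Lemma 7).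
Let `f` be `m`-strongly convex and `L`-smooth (`0 < m ≤ L`) with `∇f(0) = 0`, and let
`x̄_k` be the LMC iterates `x̄_k = x̄_{k-1} - h ∇f(x̄_{k-1}) + √(2h) ξ_k` with i.i.d. standard
Gaussian vectors `ξ₁, ξ₂, …` independent of the square-integrable initial value `x̄₀ = x₀`.
Then for every `0 ≤ h ≤ 1/(4κL)` (where `κ = L/m`) and every `k`:
`E‖x̄_k‖² ≤ E‖x₀‖² + 8d/(7m)`. -/
theorem lmc_iterates_bounded
    {d : ℕ} {Ω : Type*} {mΩ : MeasurableSpace Ω} {P : Measure Ω} [IsProbabilityMeasure P]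
    {f : Euc d → ℝ} {m L : ℝ}
    (hm : 0 < m) (hmL : m ≤ L) (hf : ContDiff ℝ 2 f) (hHess : HessianBounds m L f)
    (hgrad0 : gradient f 0 = 0)
    {x0 : Ω → Euc d} (hx0 : MemLp x0 2 P)
    {ξ : ℕ → Ω → Euc d} (hξmeas : ∀ k, Measurable (ξ k))
    (hξlaw : ∀ k, P.map (ξ k) = stdGaussian d)
    (hindep : iIndepFun (fun i : Option ℕ => i.elim x0 ξ) P)
    {h : ℝ} (hh0 : 0 ≤ h) (hh1 : h ≤ 1 / (4 * (L / m) * L))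
    {Xb : ℕ → Ω → Euc d} (hXb0 : Xb 0 = x0)
    (hXb : ∀ k : ℕ, Xb (k + 1) =
      fun ω => Xb k ω - h • gradient f (Xb k ω) + Real.sqrt (2 * h) • ξ (k + 1) ω)
    (k : ℕ) :
    (∫⁻ ω, (‖Xb k ω‖₊ : ℝ≥0∞) ^ 2 ∂P) ≤
      ENNReal.ofReal ((∫ ω, ‖x0 ω‖ ^ 2 ∂P) + 8 * d / (7 * m)) := by
  subst hXb0
  have hL : 0 < L := hm.trans_le hmL
  have hstep : h * L ^ 2 ≤ m / 4 := mul_sq_le_div_four_of_le_one_div hm hL hh1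
  have hgrad : Continuous (gradient f) := continuous_gradient (hf.of_le one_le_two)
  have hlaw (k : ℕ) : HasLaw (ξ k) (stdGaussian d) P := ⟨(hξmeas k).aemeasurable, hξlaw k⟩
  calc (∫⁻ ω, (‖Xb k ω‖₊ : ℝ≥0∞) ^ 2 ∂P)
      ≤ ENNReal.ofReal (max (∫ ω, ‖Xb 0 ω‖ ^ 2 ∂P) (2 * d / (2 * m - h * L ^ 2))) :=
        lmc_iterates_bounded_general hgrad.stronglyMeasurable
          (hHess.mul_norm_sq_le_inner_gradient hf hgrad0)
          (hHess.norm_gradient_le hm.le hL.le hf hgrad0) hmL hx0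
          (fun k ↦ memLp_two_of_hasLaw_stdGaussian (hlaw (k + 1)))
          (fun k ↦ integral_eq_zero_of_hasLaw_stdGaussian (hlaw (k + 1)))
          (fun k ↦ (integral_norm_sq_of_hasLaw_stdGaussian (hlaw (k + 1))).le)
          (indepFun_of_succ_eq_sub_smul_add hgrad.measurable hx0.1.aemeasurable
            (fun k ↦ (hlaw k).aemeasurable) hindep hXb)
          hh0 (by linarith) hXb k
    _ ≤ ENNReal.ofReal ((∫ ω, ‖Xb 0 ω‖ ^ 2 ∂P) + 8 * d / (7 * m)) := by
        gcongr
        exact max_le (le_add_of_nonneg_right (by positivity))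
          ((two_mul_div_le_of_mul_sq_le_div_four hm d.cast_nonneg hstep).trans
            (le_add_of_nonneg_left (by positivity)))
end
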